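/- arXiv:1401.7302 — 6 statements merged into one kernel-verified Lean document; each statement's English description precedes it below -/
import Mathlib

section
/- Let V be a symplectic vector space. If L and L' are Lagrangian subspaces of V, I and I' are isotropic subspaces of V, dim I = dim I', and dim(L ∩ I) = dim(L' ∩ I'), then there exists a linear automorphism φ of V preserving the symplectic form (ω(φx, φy) = ω(x, y) for all x, y) such that φ(L) = L' and φ(I) = I'. -/
open Module

/-!
The subspaces `L ⊓ I ≤ (L ⊔ I)ᗮ ≤ L` form a flag in `L` whose dimensions are determined by
`dim V`, `dim I` and `dim (L ⊓ I)`. Moreover `L` has an isotropic complement `M` adapted to `I`, in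
the sense that `I = (L ⊓ I) ⊔ (M ⊓ (L ⊔ I))`: extend a complement of `L ⊓ I` in `I` to a maximal
isotropic subspace disjoint from `L`.

An isomorphism `g : L ≃ L'` matching the two flags extends to an isometry `φ` carrying `M` to `M'`,
because `ω` identifies `M` with the dual of `L`. Being an isometry, `φ` carries
`L ⊔ I = (L ⊔ I)ᗮᗮ` to `L' ⊔ I'`, and so it carries `I` to `I'`.
-/

section SubmoduleOf

variable {R X X' : Type*} [Semiring R] [AddCommMonoid X] [Module R X] [AddCommMonoid X']
  [Module R X']

lemma finrank_submoduleOf {A P : Submodule R X} (h : A ≤ P) :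
    finrank R (A.submoduleOf P) = finrank R A :=
  (Submodule.submoduleOfEquivOfLe h).finrank_eq

lemma map_eq_of_map_submoduleOf_eq {P A : Submodule R X} {P' A' : Submodule R X'}
    (hA : A ≤ P) (hA' : A' ≤ P') {f : P →ₗ[R] P'} {g : X →ₗ[R] X'} (hgf : ∀ x : P, g x = f x)
    (hf : (A.submoduleOf P).map f = A'.submoduleOf P') : A.map g = A' := by
  have hcomp : g ∘ₗ P.subtype = P'.subtype ∘ₗ f := LinearMap.ext hgf
  calc A.map g = ((A.submoduleOf P).map P.subtype).map g := by
        rw [Submodule.submoduleOf, Submodule.map_comap_subtype, inf_eq_right.2 hA]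
    _ = ((A.submoduleOf P).map f).map P'.subtype := by
        rw [← Submodule.map_comp, hcomp, Submodule.map_comp]
    _ = A' := by
        rw [hf, Submodule.submoduleOf, Submodule.map_comap_subtype, inf_eq_right.2 hA']

lemma map_eq_of_linearEquiv {P : Submodule R X} {P' : Submodule R X'} {f : P ≃ₗ[R] P'}
    {g : X →ₗ[R] X'} (hgf : ∀ x : P, g x = f x) : P.map g = P' :=
  map_eq_of_map_submoduleOf_eq (f := f.toLinearMap) le_rfl le_rfl hgf <| by
    rw [Submodule.submoduleOf_self, Submodule.submoduleOf_self, Submodule.map_top,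
      LinearEquiv.range]

end SubmoduleOf

section LinearEquiv

variable {K X X' : Type*} [DivisionRing K] [AddCommGroup X] [Module K X]
  [AddCommGroup X'] [Module K X']

lemma exists_linearEquiv_extending [FiniteDimensional K X] [FiniteDimensional K X']
    {P : Submodule K X} {P' : Submodule K X'} (hX : finrank K X = finrank K X') (f : P ≃ₗ[K] P') :
    ∃ g : X ≃ₗ[K] X', ∀ x : P, g x = f x := by
  let e : X ≃ₗ[K] X' := LinearEquiv.ofFinrankEq X X' hX
  obtain ⟨g, hg⟩ := Submodule.exists_linearEquiv_restrict_eq (f ≪≫ₗ e.symm.submoduleMap P')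
  exact ⟨g ≪≫ₗ e, fun x ↦ by simp [← hg x]⟩

lemma exists_linearEquiv_map_eq_of_le [FiniteDimensional K X] [FiniteDimensional K X']
    {A D : Submodule K X} {A' D' : Submodule K X'} (hAD : A ≤ D) (hAD' : A' ≤ D')
    (hA : finrank K A = finrank K A') (hD : finrank K D = finrank K D')
    (hX : finrank K X = finrank K X') :
    ∃ g : X ≃ₗ[K] X', A.map g.toLinearMap = A' ∧ D.map g.toLinearMap = D' := by
  let fA : A.submoduleOf D ≃ₗ[K] A'.submoduleOf D' := Submodule.submoduleOfEquivOfLe hAD ≪≫ₗ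
    LinearEquiv.ofFinrankEq A A' hA ≪≫ₗ (Submodule.submoduleOfEquivOfLe hAD').symm
  obtain ⟨fD, hfD⟩ := exists_linearEquiv_extending hD fA
  obtain ⟨g, hg⟩ := exists_linearEquiv_extending hX fD
  exact ⟨g, map_eq_of_map_submoduleOf_eq hAD hAD' hg (map_eq_of_linearEquiv hfD),
    map_eq_of_linearEquiv hg⟩

end LinearEquiv

section Orthogonal

open LinearMap.BilinForm

variable {R M M' : Type*} [CommSemiring R] [AddCommMonoid M] [Module R M] [AddCommMonoid M']
  [Module R M'] {B : LinearMap.BilinForm R M} {B' : LinearMap.BilinForm R M'}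

lemma orthogonal_sup (P Q : Submodule R M) :
    B.orthogonal (P ⊔ Q) = B.orthogonal P ⊓ B.orthogonal Q := by
  refine le_antisymm (le_inf (orthogonal_le le_sup_left) (orthogonal_le le_sup_right)) ?_
  rintro x ⟨hxP, hxQ⟩ y hy
  obtain ⟨p, hp, q, hq, rfl⟩ := Submodule.mem_sup.1 hy
  rw [map_add, LinearMap.add_apply, hxP p hp, hxQ q hq, add_zero]

lemma map_orthogonal (φ : B.IsometryEquiv B') (P : Submodule R M) :
    (B.orthogonal P).map φ.toLinearEquiv.toLinearMap =
      B'.orthogonal (P.map φ.toLinearEquiv.toLinearMap) := by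
  ext y
  obtain ⟨x, rfl⟩ := φ.toLinearEquiv.surjective y
  rw [Submodule.mem_map_equiv, LinearEquiv.symm_apply_apply]
  simp only [mem_orthogonal_iff, Submodule.mem_map, forall_exists_index, and_imp,
    forall_apply_eq_imp_iff₂, LinearEquiv.coe_coe, IsometryEquiv.coe_toLinearEquiv,
    IsometryEquiv.map_app]

lemma sup_le_orthogonal_sup (hB : B.IsRefl) {P Q : Submodule R M} (hP : P ≤ B.orthogonal P)
    (hQ : Q ≤ B.orthogonal Q) (hPQ : Q ≤ B.orthogonal P) : P ⊔ Q ≤ B.orthogonal (P ⊔ Q) := by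
  have hQP : P ≤ B.orthogonal Q := (le_orthogonal_orthogonal hB).trans (orthogonal_le hPQ)
  rw [orthogonal_sup]
  exact sup_le (le_inf hP hQP) (le_inf hPQ hQ)

lemma span_singleton_le_orthogonal_self {v : M} (hv : B v v = 0) :
    Submodule.span R {v} ≤ B.orthogonal (Submodule.span R {v}) := by
  rw [Submodule.span_singleton_le_iff_mem]
  intro x hx
  obtain ⟨c, rfl⟩ := Submodule.mem_span_singleton.1 hx
  simp [hv]

lemma inf_le_orthogonal_sup {P Q : Submodule R M} (hP : P ≤ B.orthogonal P)
    (hQ : Q ≤ B.orthogonal Q) : P ⊓ Q ≤ B.orthogonal (P ⊔ Q) := by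
  rw [orthogonal_sup]
  exact inf_le_inf hP hQ

end Orthogonal

section Isometry

variable {R V V' : Type*} [CommRing R] [AddCommGroup V] [Module R V] [AddCommGroup V']
  [Module R V'] {ω : LinearMap.BilinForm R V} {ω' : LinearMap.BilinForm R V'}

lemma exists_linearEquiv_pairing_eq {X X' Y Y' : Type*} [AddCommGroup X] [Module R X]
    [AddCommGroup X'] [Module R X'] [AddCommGroup Y] [Module R Y] [AddCommGroup Y'] [Module R Y']
    (p : X →ₗ[R] Y →ₗ[R] R) (p' : X' →ₗ[R] Y' →ₗ[R] R)
    [p.IsPerfPair] [p'.IsPerfPair] (g : X ≃ₗ[R] X') :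
    ∃ h : Y ≃ₗ[R] Y', ∀ x y, p' (g x) (h y) = p x y :=
  ⟨p.flip.toPerfPair ≪≫ₗ g.symm.dualMap ≪≫ₗ p'.flip.toPerfPair.symm, fun x y ↦ by simp⟩

lemma exists_isometryEquiv_of_isCompl (halt : ω.IsAlt) (halt' : ω'.IsAlt)
    {L M : Submodule R V} {L' M' : Submodule R V'} (hL : L ≤ ω.orthogonal L)
    (hM : M ≤ ω.orthogonal M) (hL' : L' ≤ ω'.orthogonal L') (hM' : M' ≤ ω'.orthogonal M')
    (hLM : IsCompl L M) (hLM' : IsCompl L' M') (g : L ≃ₗ[R] L') (h : M ≃ₗ[R] M')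
    (hgh : ∀ (l : L) (m : M), ω' (g l) (h m) = ω l m) :
    ∃ φ : ω.IsometryEquiv ω', (∀ l : L, φ l = g l) ∧ ∀ m : M, φ m = h m := by
  let e : V ≃ₗ[R] V' := (Submodule.prodEquivOfIsCompl L M hLM).symm ≪≫ₗ g.prodCongr h ≪≫ₗ
    Submodule.prodEquivOfIsCompl L' M' hLM'
  have heL (l : L) : e l = g l := by simp [e]
  have heM (m : M) : e m = h m := by simp [e]
  have hhg (m : M) (l : L) : ω' (h m) (g l) = ω m l := by
    rw [← LinearMap.IsAlt.neg halt', ← LinearMap.IsAlt.neg halt, hgh]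
  refine ⟨⟨e, fun x y ↦ ?_⟩, heL, heM⟩
  obtain ⟨⟨l₁, m₁⟩, rfl⟩ := (Submodule.prodEquivOfIsCompl L M hLM).surjective x
  obtain ⟨⟨l₂, m₂⟩, rfl⟩ := (Submodule.prodEquivOfIsCompl L M hLM).surjective y
  have hωL : ω (l₁ : V) l₂ = 0 := hL l₂.2 _ l₁.2
  have hωM : ω (m₁ : V) m₂ = 0 := hM m₂.2 _ m₁.2
  have hωL' : ω' (g l₁ : V') (g l₂) = 0 := hL' (g l₂).2 _ (g l₁).2
  have hωM' : ω' (h m₁ : V') (h m₂) = 0 := hM' (h m₂).2 _ (h m₁).2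
  simp [heL, heM, hgh, hhg, hωL, hωM, hωL', hωM']

end Isometry

section Symplectic

open LinearMap.BilinForm

variable {K V V' : Type*} [Field K] [AddCommGroup V] [Module K V] [FiniteDimensional K V]
  [AddCommGroup V'] [Module K V'] [FiniteDimensional K V']
  {ω : LinearMap.BilinForm K V} {ω' : LinearMap.BilinForm K V'}

lemma two_mul_finrank_eq_of_orthogonal_eq (hnd : ω.Nondegenerate) {L : Submodule K V}
    (hL : ω.orthogonal L = L) : 2 * finrank K L = finrank K V := by
  have horth := finrank_orthogonal hnd L
  have hle := L.finrank_le
  rw [hL] at horth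
  lia

lemma finrank_orthogonal_sup_eq (hnd : ω.Nondegenerate) (hnd' : ω'.Nondegenerate)
    (hV : finrank K V = finrank K V') {L I : Submodule K V} {L' I' : Submodule K V'}
    (hL : finrank K L = finrank K L') (hI : finrank K I = finrank K I')
    (hLI : finrank K ↥(L ⊓ I) = finrank K ↥(L' ⊓ I')) :
    finrank K (ω.orthogonal (L ⊔ I)) = finrank K (ω'.orthogonal (L' ⊔ I')) := by
  have hsup := Submodule.finrank_sup_add_finrank_inf_eq L I
  have hsup' := Submodule.finrank_sup_add_finrank_inf_eq L' I'
  rw [finrank_orthogonal hnd, finrank_orthogonal hnd']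
  lia

lemma exists_isotropic_isCompl_of_disjoint (hnd : ω.Nondegenerate) (halt : ω.IsAlt)
    {L C : Submodule K V} (hL : ω.orthogonal L ≤ L) (hC : C ≤ ω.orthogonal C)
    (hLC : Disjoint L C) : ∃ M, C ≤ M ∧ M ≤ ω.orthogonal M ∧ IsCompl L M := by
  obtain ⟨M, hCM, ⟨hM, hLM⟩, hmax⟩ := exists_maximal_ge_of_wellFoundedGT
    (fun M ↦ M ≤ ω.orthogonal M ∧ Disjoint L M) C ⟨hC, hLC⟩
  have horth_le : ω.orthogonal M ≤ L ⊔ M := by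
    intro v hv
    by_contra hvLM
    have hle : M ⊔ Submodule.span K {v} ≤ M := hmax
      ⟨sup_le_orthogonal_sup halt.isRefl hM (span_singleton_le_orthogonal_self (halt v))
        ((Submodule.span_singleton_le_iff_mem _ _).2 hv),
        hLM.disjoint_sup_right_of_disjoint_sup_left
          (Submodule.disjoint_span_singleton_of_notMem hvLM)⟩ le_sup_left
    exact hvLM (Submodule.mem_sup_right
      ((Submodule.span_singleton_le_iff_mem _ _).1 (le_sup_right.trans hle)))
  have hsup_orth_le : ω.orthogonal (L ⊔ M) ≤ L ⊓ M :=
    le_inf ((orthogonal_le le_sup_left).trans hL)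
      ((orthogonal_le horth_le).trans (orthogonal_orthogonal hnd halt.isRefl M).le)
  have hsup_top : L ⊔ M = ⊤ := by
    rw [← orthogonal_orthogonal hnd halt.isRefl (L ⊔ M),
      le_bot_iff.1 (hsup_orth_le.trans hLM.le_bot), orthogonal_bot]
  exact ⟨M, hCM, hM, hLM, codisjoint_iff.2 hsup_top⟩

lemma exists_isotropic_isCompl_adapted (hnd : ω.Nondegenerate) (halt : ω.IsAlt)
    {L I : Submodule K V} (hL : ω.orthogonal L ≤ L) (hI : I ≤ ω.orthogonal I) :
    ∃ M, M ≤ ω.orthogonal M ∧ IsCompl L M ∧ (L ⊓ I) ⊔ (M ⊓ (L ⊔ I)) = I := by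
  obtain ⟨C, hdisj, hsup⟩ :=
    IsModularLattice.exists_disjoint_and_sup_eq (inf_le_right : L ⊓ I ≤ I)
  have hCI : C ≤ I := le_sup_right.trans hsup.le
  have hLC : Disjoint L C := by
    rw [disjoint_iff, ← inf_eq_right.2 hCI, ← inf_assoc, hdisj.eq_bot]
  obtain ⟨M, hCM, hM, hLM⟩ := exists_isotropic_isCompl_of_disjoint hnd halt hL
    (hCI.trans (hI.trans (orthogonal_le hCI))) hLC
  have hinf : M ⊓ (L ⊔ I) = C := by
    rw [← hsup, ← sup_assoc, sup_inf_self, inf_comm, sup_comm, sup_inf_assoc_of_le L hCM,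
      hLM.inf_eq_bot, sup_bot_eq]
  exact ⟨M, hM, hLM, by rw [hinf, hsup]⟩

lemma isPerfPair_domRestrict₁₂ (hnd : ω.Nondegenerate) (hrefl : ω.IsRefl) {L M : Submodule K V}
    (hLM : IsCompl (ω.orthogonal L) M) : (ω.domRestrict₁₂ L M).IsPerfPair := by
  refine .of_injective ((injective_iff_map_eq_zero _).2 fun l hl ↦ ?_)
    ((injective_iff_map_eq_zero _).2 fun m hm ↦ ?_)
  · have hlM : (l : V) ∈ ω.orthogonal M := fun m hm ↦ hrefl _ _ (LinearMap.congr_fun hl ⟨m, hm⟩)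
    have hl_mem : (l : V) ∈ ω.orthogonal (ω.orthogonal L ⊔ M) := by
      rw [orthogonal_sup]
      exact ⟨le_orthogonal_orthogonal hrefl l.2, hlM⟩
    rw [hLM.sup_eq_top, orthogonal_top_eq_bot hnd] at hl_mem
    exact Subtype.ext hl_mem
  · have hmL : (m : V) ∈ ω.orthogonal L := fun l hl ↦ LinearMap.congr_fun hm ⟨l, hl⟩
    exact Subtype.ext (Submodule.disjoint_def.1 hLM.disjoint m hmL m.2)

lemma exists_isometryEquiv_map_eq (hnd : ω.Nondegenerate) (halt : ω.IsAlt)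
    (hnd' : ω'.Nondegenerate) (halt' : ω'.IsAlt) {L M : Submodule K V} {L' M' : Submodule K V'}
    (hL : ω.orthogonal L = L) (hL' : ω'.orthogonal L' = L')
    (hM : M ≤ ω.orthogonal M) (hM' : M' ≤ ω'.orthogonal M')
    (hLM : IsCompl L M) (hLM' : IsCompl L' M') (g : L ≃ₗ[K] L') :
    ∃ φ : ω.IsometryEquiv ω', (∀ l : L, φ l = g l) ∧
      M.map φ.toLinearEquiv.toLinearMap = M' := by
  have := isPerfPair_domRestrict₁₂ hnd halt.isRefl (hL.symm ▸ hLM)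
  have := isPerfPair_domRestrict₁₂ hnd' halt'.isRefl (hL'.symm ▸ hLM')
  obtain ⟨h, hgh⟩ :=
    exists_linearEquiv_pairing_eq (ω.domRestrict₁₂ L M) (ω'.domRestrict₁₂ L' M') g
  obtain ⟨φ, hφL, hφM⟩ :=
    exists_isometryEquiv_of_isCompl halt halt' hL.ge hM hL'.ge hM' hLM hLM' g h hgh
  exact ⟨φ, hφL, map_eq_of_linearEquiv hφM⟩

lemma exists_isometryEquiv_map_flag_eq (hnd : ω.Nondegenerate) (halt : ω.IsAlt)
    (hnd' : ω'.Nondegenerate) (halt' : ω'.IsAlt)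
    {A D L M : Submodule K V} {A' D' L' M' : Submodule K V'}
    (hL : ω.orthogonal L = L) (hL' : ω'.orthogonal L' = L')
    (hM : M ≤ ω.orthogonal M) (hM' : M' ≤ ω'.orthogonal M')
    (hLM : IsCompl L M) (hLM' : IsCompl L' M')
    (hAD : A ≤ D) (hDL : D ≤ L) (hAD' : A' ≤ D') (hDL' : D' ≤ L')
    (hA : finrank K A = finrank K A') (hD : finrank K D = finrank K D')
    (hdimL : finrank K L = finrank K L') :
    ∃ φ : ω.IsometryEquiv ω',
      A.map φ.toLinearEquiv.toLinearMap = A' ∧ D.map φ.toLinearEquiv.toLinearMap = D' ∧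
      L.map φ.toLinearEquiv.toLinearMap = L' ∧ M.map φ.toLinearEquiv.toLinearMap = M' := by
  obtain ⟨g, hgA, hgD⟩ := exists_linearEquiv_map_eq_of_le
    (Submodule.comap_mono hAD : A.submoduleOf L ≤ D.submoduleOf L)
    (Submodule.comap_mono hAD' : A'.submoduleOf L' ≤ D'.submoduleOf L')
    (((finrank_submoduleOf (hAD.trans hDL)).trans hA).trans
      (finrank_submoduleOf (hAD'.trans hDL')).symm)
    (((finrank_submoduleOf hDL).trans hD).trans (finrank_submoduleOf hDL').symm) hdimL
  obtain ⟨φ, hφL, hφM⟩ := exists_isometryEquiv_map_eq hnd halt hnd' halt' hL hL' hM hM' hLM hLM' g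
  exact ⟨φ, map_eq_of_map_submoduleOf_eq (hAD.trans hDL) (hAD'.trans hDL') hφL hgA,
    map_eq_of_map_submoduleOf_eq hDL hDL' hφL hgD, map_eq_of_linearEquiv hφL, hφM⟩

theorem lagrangian_isotropic_pair_classification_general
    (hnd : ω.Nondegenerate) (halt : ω.IsAlt) (hnd' : ω'.Nondegenerate) (halt' : ω'.IsAlt)
    (hV : finrank K V = finrank K V') {L I : Submodule K V} {L' I' : Submodule K V'}
    (hL : ω.orthogonal L = L) (hL' : ω'.orthogonal L' = L')
    (hI : I ≤ ω.orthogonal I) (hI' : I' ≤ ω'.orthogonal I')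
    (hdimI : finrank K I = finrank K I')
    (hdimLI : finrank K ↥(L ⊓ I) = finrank K ↥(L' ⊓ I')) :
    ∃ φ : ω.IsometryEquiv ω',
      L.map φ.toLinearEquiv.toLinearMap = L' ∧ I.map φ.toLinearEquiv.toLinearMap = I' := by
  have hdimL : finrank K L = finrank K L' := by
    have := two_mul_finrank_eq_of_orthogonal_eq hnd hL
    have := two_mul_finrank_eq_of_orthogonal_eq hnd' hL'
    lia
  obtain ⟨M, hM, hLM, hMI⟩ := exists_isotropic_isCompl_adapted hnd halt hL.le hI
  obtain ⟨M', hM', hLM', hMI'⟩ := exists_isotropic_isCompl_adapted hnd' halt' hL'.le hI'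
  obtain ⟨φ, hφLI, hφD, hφL, hφM⟩ := exists_isometryEquiv_map_flag_eq hnd halt hnd' halt'
    hL hL' hM hM' hLM hLM'
    (inf_le_orthogonal_sup hL.ge hI) ((orthogonal_le le_sup_left).trans hL.le)
    (inf_le_orthogonal_sup hL'.ge hI') ((orthogonal_le le_sup_left).trans hL'.le) hdimLI
    (finrank_orthogonal_sup_eq hnd hnd' hV hdimL hdimI hdimLI) hdimL
  have hφsup : (L ⊔ I).map φ.toLinearEquiv.toLinearMap = L' ⊔ I' := by
    rw [← orthogonal_orthogonal hnd halt.isRefl (L ⊔ I), map_orthogonal, hφD,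
      orthogonal_orthogonal hnd' halt'.isRefl]
  refine ⟨φ, hφL, ?_⟩
  rw [← hMI, Submodule.map_sup, Submodule.map_inf _ φ.toLinearEquiv.injective (p := M), hφLI, hφM,
    hφsup, hMI']

end Symplectic

/-- In a symplectic vector space `(V, ω)`, a pair consisting of a Lagrangian subspace and an
isotropic subspace is characterized up to symplectomorphism by the dimensions of the isotropic
subspace and of its intersection with the Lagrangian: if `L, L'` are Lagrangian, `I, I'` are
isotropic, `dim I = dim I'` and `dim (L ⊓ I) = dim (L' ⊓ I')`, then there is a linear
automorphism of `V` preserving `ω` carrying `L` to `L'` and `I` to `I'`. -/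
theorem lagrangian_isotropic_pair_classification
    (V : Type*) [AddCommGroup V] [Module ℝ V] [FiniteDimensional ℝ V]
    (ω : LinearMap.BilinForm ℝ V) (hnd : ω.Nondegenerate) (halt : ω.IsAlt)
    (L L' I I' : Submodule ℝ V)
    (hL : ω.orthogonal L = L) (hL' : ω.orthogonal L' = L')
    (hI : I ≤ ω.orthogonal I) (hI' : I' ≤ ω.orthogonal I')
    (hdimI : finrank ℝ I = finrank ℝ I')
    (hdimLI : finrank ℝ ↥(L ⊓ I) = finrank ℝ ↥(L' ⊓ I')) :
    ∃ φ : V ≃ₗ[ℝ] V, (∀ x y : V, ω (φ x) (φ y) = ω x y) ∧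
      Submodule.map (φ : V →ₗ[ℝ] V) L = L' ∧ Submodule.map (φ : V →ₗ[ℝ] V) I = I' := by
  obtain ⟨φ, hφL, hφI⟩ := lagrangian_isotropic_pair_classification_general
    hnd halt hnd halt rfl hL hL' hI hI' hdimI hdimLI
  exact ⟨φ.toLinearEquiv, fun x y ↦ φ.map_app y x, hφL, hφI⟩
end

section
/- Let V be a symplectic vector space. The relation on pairs (L, k), where L is a Lagrangian subspace of V and k ∈ ℕ, defined by (L, k) ⪯ (L', k') if and only if d(L, L') + k ≤ k', is a partial order: it is reflexive, transitive, and antisymmetric (i.e. (L, k) ⪯ (L', k') and (L', k') ⪯ (L, k) imply L = L' and k = k'). -/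
/-!
On finite-dimensional subspaces, `d(W, W') = dim W - dim (W ⊓ W')` is a quasi-metric: it is
nonnegative, vanishes exactly when `W ≤ W'`, and satisfies the triangle inequality because
`W₁ ⊓ W₂` and `W₂ ⊓ W₃` both lie in `W₂` and meet inside `W₁ ⊓ W₃`. For any quasi-metric, the
relation `d(x, y) + k ≤ l` is a partial order on indexed points, as for formal balls.
-/

open Module

section ChowDistance

variable {K V : Type*} [DivisionRing K] [AddCommGroup V] [Module K V]

/-- The Chow distance from `W` to `W'`, that is, the codimension of `W ⊓ W'` in `W`. It is symmetric
only between subspaces of equal dimension, and is meaningful only for finite-dimensional `W`, since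
`finrank` is `0` in infinite dimension. The value is an integer to avoid truncated subtraction. -/
noncomputable def chowDist (W W' : Submodule K V) : ℤ :=
  (finrank K W : ℤ) - finrank K ↥(W ⊓ W')

lemma chowDist_nonneg (W W' : Submodule K V) [FiniteDimensional K W] : 0 ≤ chowDist W W' :=
  sub_nonneg.mpr (Nat.cast_le.mpr (Submodule.finrank_mono inf_le_left))

lemma chowDist_eq_zero_iff {W W' : Submodule K V} [FiniteDimensional K W] :
    chowDist W W' = 0 ↔ W ≤ W' := by
  rw [chowDist, sub_eq_zero, Nat.cast_inj, ← inf_eq_left]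
  exact ⟨fun h => Submodule.eq_of_le_of_finrank_eq inf_le_left h.symm, fun h => by rw [h]⟩

lemma finrank_inf_add_finrank_inf_le (W₁ W₂ W₃ : Submodule K V)
    [FiniteDimensional K W₁] [FiniteDimensional K W₂] :
    finrank K ↥(W₁ ⊓ W₂) + finrank K ↥(W₂ ⊓ W₃) ≤ finrank K W₂ + finrank K ↥(W₁ ⊓ W₃) := by
  rw [← Submodule.finrank_sup_add_finrank_inf_eq]
  exact add_le_add
    (Submodule.finrank_mono (sup_le inf_le_right inf_le_left))
    (Submodule.finrank_mono (inf_le_inf inf_le_left inf_le_right))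

lemma chowDist_triangle (W₁ W₂ W₃ : Submodule K V)
    [FiniteDimensional K W₁] [FiniteDimensional K W₂] :
    chowDist W₁ W₃ ≤ chowDist W₁ W₂ + chowDist W₂ W₃ := by
  have h := finrank_inf_add_finrank_inf_le W₁ W₂ W₃
  simp only [chowDist]
  lia

theorem sublevel_partialOrder_general :
    IsPartialOrder ({W : Submodule K V // FiniteDimensional K W} × ℤ)
      (fun p q => chowDist p.1.1 q.1.1 + p.2 ≤ q.2) where
  refl := by
    rintro ⟨⟨W, _⟩, k⟩
    simp only [chowDist_eq_zero_iff.mpr le_rfl, zero_add, le_refl]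
  trans := by
    rintro ⟨⟨W₁, _⟩, k₁⟩ ⟨⟨W₂, _⟩, k₂⟩ ⟨⟨W₃, _⟩, k₃⟩ h₁₂ h₂₃
    linarith [chowDist_triangle W₁ W₂ W₃]
  antisymm := by
    rintro ⟨⟨W₁, _⟩, k₁⟩ ⟨⟨W₂, _⟩, k₂⟩ h₁₂ h₂₁
    have hnonneg₁₂ := chowDist_nonneg W₁ W₂
    have hnonneg₂₁ := chowDist_nonneg W₂ W₁
    have hle₁₂ : W₁ ≤ W₂ := chowDist_eq_zero_iff.mp (by linarith)
    have hle₂₁ : W₂ ≤ W₁ := chowDist_eq_zero_iff.mp (by linarith)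
    exact Prod.ext (Subtype.ext (le_antisymm hle₁₂ hle₂₁)) (by linarith)

end ChowDistance

/-- On the indexed Lagrangian Grassmannian of a symplectic vector space — pairs `(L, k)` with
`L` a Lagrangian subspace and `k ∈ ℕ` — the relation `(L, k) ⪯ (L', k')` iff
`d(L, L') + k ≤ k'`, where `d` is the Chow distance `d(L, L') = dim L - dim (L ⊓ L')`, is a
partial order: it is reflexive, transitive, and antisymmetric. -/
theorem sublevel_partialOrder
    (V : Type*) [AddCommGroup V] [Module ℝ V] [FiniteDimensional ℝ V]
    (ω : LinearMap.BilinForm ℝ V) (hnd : ω.Nondegenerate) (halt : ω.IsAlt) :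
    (∀ (L : Submodule ℝ V) (k : ℕ), ω.orthogonal L = L →
      ((finrank ℝ L : ℤ) - finrank ℝ ↥(L ⊓ L)) + k ≤ k) ∧
    (∀ (L₁ L₂ L₃ : Submodule ℝ V) (k₁ k₂ k₃ : ℕ),
      ω.orthogonal L₁ = L₁ → ω.orthogonal L₂ = L₂ → ω.orthogonal L₃ = L₃ →
      ((finrank ℝ L₁ : ℤ) - finrank ℝ ↥(L₁ ⊓ L₂)) + k₁ ≤ k₂ →
      ((finrank ℝ L₂ : ℤ) - finrank ℝ ↥(L₂ ⊓ L₃)) + k₂ ≤ k₃ →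
      ((finrank ℝ L₁ : ℤ) - finrank ℝ ↥(L₁ ⊓ L₃)) + k₁ ≤ k₃) ∧
    (∀ (L₁ L₂ : Submodule ℝ V) (k₁ k₂ : ℕ),
      ω.orthogonal L₁ = L₁ → ω.orthogonal L₂ = L₂ →
      ((finrank ℝ L₁ : ℤ) - finrank ℝ ↥(L₁ ⊓ L₂)) + k₁ ≤ k₂ →
      ((finrank ℝ L₂ : ℤ) - finrank ℝ ↥(L₂ ⊓ L₁)) + k₂ ≤ k₁ →
      L₁ = L₂ ∧ k₁ = k₂) := by
  let point (L : Submodule ℝ V) (k : ℕ) : {W : Submodule ℝ V // FiniteDimensional ℝ W} × ℤ :=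
    (⟨L, inferInstance⟩, k)
  have order := sublevel_partialOrder_general (K := ℝ) (V := V)
  exact ⟨fun L k _ => order.refl (point L k),
    fun L₁ L₂ L₃ k₁ k₂ k₃ _ _ _ => order.trans (point L₁ k₁) (point L₂ k₂) (point L₃ k₃),
    fun L₁ L₂ k₁ k₂ _ _ h₁₂ h₂₁ => by
      simpa [point] using order.antisymm (point L₁ k₁) (point L₂ k₂) h₁₂ h₂₁⟩
end

section
/- Let X, Y, Z be symplectic vector spaces with forms ω_X, ω_Y, ω_Z. Let f ⊆ X × Y be a Lagrangian subspace for the form ω_X ⊖ ω_Y, and let g ⊆ Y × Z be a Lagrangian subspace for ω_Y ⊖ ω_Z. Then the set-theoretic composition f ∘ g := {(x, z) ∈ X × Z : ∃ y ∈ Y, (x, y) ∈ f and (y, z) ∈ g} is a Lagrangian subspace of X × Z for the form ω_X ⊖ ω_Z. (In particular, symplectic vector spaces and linear canonical relations form a category.) -/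
/-!
Taking orthogonals commutes with composing linear relations: `(f ∘ g)ᗮ = fᗮ ∘ gᗮ`. Only `⊆` needs
an argument. If `(x, z)` is orthogonal to `f ∘ g`, then `ωX a x = ωZ d z` whenever `(a, b) ∈ f` and
`(b, d) ∈ g`, that is, the functional `(a, b) ↦ ωX a x` on `f` and the functional `(c, d) ↦ ωZ d z`
on `g` agree over `Y`. Both are therefore pulled back from one functional `φ` on `Y`, and a vector
`y` with `φ = ωY · y` satisfies `(x, y) ∈ fᗮ` and `(y, z) ∈ gᗮ`. Such a `y` exists as soon as `φ`
vanishes on `ker ωY`, which is the case when `f` contains `0 × ker ωY`. A Lagrangian `f = fᗮ`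
contains `0 × ker ωY.flip`, and the two kernels agree when `ωY` is alternating.
-/

open Module

/-- The difference form `ω_X ⊖ ω_Y` on `X × Y`:
`(ω_X ⊖ ω_Y)((x, y), (x', y')) = ω_X x x' - ω_Y y y'`. -/
noncomputable def diffForm {X Y : Type*} [AddCommGroup X] [Module ℝ X]
    [AddCommGroup Y] [Module ℝ Y]
    (ωX : LinearMap.BilinForm ℝ X) (ωY : LinearMap.BilinForm ℝ Y) :
    LinearMap.BilinForm ℝ (X × Y) :=
  ωX.comp (LinearMap.fst ℝ X Y) (LinearMap.fst ℝ X Y) -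
    ωY.comp (LinearMap.snd ℝ X Y) (LinearMap.snd ℝ X Y)

section Composition

variable {R X Y Z : Type*} [Semiring R] [AddCommMonoid X] [Module R X]
  [AddCommMonoid Y] [Module R Y] [AddCommMonoid Z] [Module R Z]

/-- The composite `f ∘ g` of linear relations `f ⊆ X × Y` and `g ⊆ Y × Z`, as a subspace of
`X × Z`. A relation from `Y` to `X` is a subspace of `X × Y`, so `g` is applied first. -/
def linearRelComp (f : Submodule R (X × Y)) (g : Submodule R (Y × Z)) : Submodule R (X × Z) where
  carrier := {p | ∃ y, (p.1, y) ∈ f ∧ (y, p.2) ∈ g}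
  zero_mem' := ⟨0, f.zero_mem, g.zero_mem⟩
  add_mem' := fun ⟨y, hf, hg⟩ ⟨y', hf', hg'⟩ ↦ ⟨y + y', f.add_mem hf hf', g.add_mem hg hg'⟩
  smul_mem' := fun r _ ⟨y, hf, hg⟩ ↦ ⟨r • y, f.smul_mem r hf, g.smul_mem r hg⟩

theorem mk_mem_linearRelComp {f : Submodule R (X × Y)} {g : Submodule R (Y × Z)} {x : X} {z : Z} :
    (x, z) ∈ linearRelComp f g ↔ ∃ y, (x, y) ∈ f ∧ (y, z) ∈ g :=
  Iff.rfl

end Composition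

theorem exists_dual_comp_eq_and_comp_eq {K F G V : Type*} [Field K] [AddCommGroup F] [Module K F]
    [AddCommGroup G] [Module K G] [AddCommGroup V] [Module K V]
    {p : F →ₗ[K] V} {q : G →ₗ[K] V} {α : Dual K F} {β : Dual K G}
    (h : ∀ u v, p u = q v → α u = β v) :
    ∃ φ : Dual K V, φ ∘ₗ p = α ∧ φ ∘ₗ q = β := by
  have hker : α.coprod (-β) ∈ (LinearMap.ker (p.coprod (-q))).dualAnnihilator := by
    rw [Submodule.mem_dualAnnihilator]
    rintro ⟨u, v⟩ huv
    have hpq : p u = q v := by simpa [← sub_eq_add_neg, sub_eq_zero] using huv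
    simp [h u v hpq]
  rw [← LinearMap.range_dualMap_eq_dualAnnihilator_ker] at hker
  obtain ⟨φ, hφ⟩ := hker
  refine ⟨φ, LinearMap.ext fun u ↦ ?_, LinearMap.ext fun v ↦ ?_⟩
  · simpa using LinearMap.congr_fun hφ (u, 0)
  · simpa using LinearMap.congr_fun hφ (0, v)

theorem exists_forall_apply_eq_of_ker_le {K V W : Type*} [Field K] [AddCommGroup V] [Module K V]
    [AddCommGroup W] [Module K W] [FiniteDimensional K W] {B : V →ₗ[K] W →ₗ[K] K} {φ : Dual K V}
    (h : LinearMap.ker B ≤ LinearMap.ker φ) : ∃ w, ∀ v, B v w = φ v := by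
  have hφ : φ ∈ LinearMap.range B.flip := by
    rw [← LinearMap.dualAnnihilator_ker_eq_range_flip, Submodule.mem_dualAnnihilator]
    exact fun v hv ↦ h hv
  obtain ⟨w, hw⟩ := hφ
  exact ⟨w, LinearMap.congr_fun hw⟩

section Orthogonal

variable {X Y Z : Type*} [AddCommGroup X] [Module ℝ X] [AddCommGroup Y] [Module ℝ Y]
  [AddCommGroup Z] [Module ℝ Z] {ωX : LinearMap.BilinForm ℝ X} {ωY : LinearMap.BilinForm ℝ Y}
  {ωZ : LinearMap.BilinForm ℝ Z} {f : Submodule ℝ (X × Y)} {g : Submodule ℝ (Y × Z)}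

theorem mk_mem_orthogonal_diffForm {x : X} {y : Y} :
    (x, y) ∈ (diffForm ωX ωY).orthogonal f ↔ ∀ a b, (a, b) ∈ f → ωX a x = ωY b y := by
  simp [LinearMap.BilinForm.mem_orthogonal_iff, diffForm, sub_eq_zero]

theorem linearRelComp_orthogonal_le :
    linearRelComp ((diffForm ωX ωY).orthogonal f) ((diffForm ωY ωZ).orthogonal g) ≤
      (diffForm ωX ωZ).orthogonal (linearRelComp f g) := by
  rintro ⟨x, z⟩ ⟨y, hxy, hyz⟩
  rw [mk_mem_orthogonal_diffForm] at hxy hyz ⊢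
  rintro a d ⟨b, hab, hbd⟩
  exact (hxy a b hab).trans (hyz b d hbd)

theorem orthogonal_linearRelComp_le [FiniteDimensional ℝ Y]
    (hker : ∀ y ∈ LinearMap.ker ωY, (0, y) ∈ f) :
    (diffForm ωX ωZ).orthogonal (linearRelComp f g) ≤
      linearRelComp ((diffForm ωX ωY).orthogonal f) ((diffForm ωY ωZ).orthogonal g) := by
  rintro ⟨x, z⟩ hxz
  rw [mk_mem_orthogonal_diffForm] at hxz
  let α : Dual ℝ f := ωX.flip x ∘ₗ LinearMap.fst ℝ X Y ∘ₗ f.subtype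
  let β : Dual ℝ g := ωZ.flip z ∘ₗ LinearMap.snd ℝ Y Z ∘ₗ g.subtype
  obtain ⟨φ, hφα, hφβ⟩ : ∃ φ : Dual ℝ Y,
      φ ∘ₗ LinearMap.snd ℝ X Y ∘ₗ f.subtype = α ∧ φ ∘ₗ LinearMap.fst ℝ Y Z ∘ₗ g.subtype = β := by
    refine exists_dual_comp_eq_and_comp_eq ?_
    rintro ⟨⟨a, b⟩, hab⟩ ⟨⟨_, d⟩, hbd⟩ rfl
    exact hxz a d ⟨b, hab, hbd⟩
  have hφf (a : X) (b : Y) (hab : (a, b) ∈ f) : φ b = ωX a x :=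
    LinearMap.congr_fun hφα ⟨(a, b), hab⟩
  have hφg (c : Y) (d : Z) (hcd : (c, d) ∈ g) : φ c = ωZ d z :=
    LinearMap.congr_fun hφβ ⟨(c, d), hcd⟩
  have hφker : LinearMap.ker ωY ≤ LinearMap.ker φ := fun b hb ↦ by
    simpa using hφf 0 b (hker b hb)
  obtain ⟨y, hy⟩ := exists_forall_apply_eq_of_ker_le hφker
  rw [mk_mem_linearRelComp]
  refine ⟨y, mk_mem_orthogonal_diffForm.2 fun a b hab ↦ ?_,
    mk_mem_orthogonal_diffForm.2 fun c d hcd ↦ ?_⟩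
  · rw [hy, hφf a b hab]
  · rw [hy, hφg c d hcd]

theorem orthogonal_linearRelComp [FiniteDimensional ℝ Y]
    (hker : ∀ y ∈ LinearMap.ker ωY, (0, y) ∈ f) :
    (diffForm ωX ωZ).orthogonal (linearRelComp f g) =
      linearRelComp ((diffForm ωX ωY).orthogonal f) ((diffForm ωY ωZ).orthogonal g) :=
  (orthogonal_linearRelComp_le hker).antisymm linearRelComp_orthogonal_le

theorem zero_mk_mem_orthogonal_diffForm {y : Y} (hy : y ∈ LinearMap.ker ωY.flip) :
    (0, y) ∈ (diffForm ωX ωY).orthogonal f := by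
  refine mk_mem_orthogonal_diffForm.2 fun a b _ ↦ ?_
  simpa using (LinearMap.congr_fun hy b).symm

theorem comp_canonical_relation_lagrangian_general [FiniteDimensional ℝ Y]
    (hY : LinearMap.ker ωY ≤ LinearMap.ker ωY.flip)
    (hf : (diffForm ωX ωY).orthogonal f = f) (hg : (diffForm ωY ωZ).orthogonal g = g) :
    (diffForm ωX ωZ).orthogonal (linearRelComp f g) = linearRelComp f g := by
  have hker : ∀ y ∈ LinearMap.ker ωY, (0, y) ∈ f := fun y hy ↦
    hf ▸ zero_mk_mem_orthogonal_diffForm (hY hy)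
  rw [orthogonal_linearRelComp hker, hf, hg]

end Orthogonal

/-- The set-theoretic composition of linear canonical relations is again a linear canonical
relation: if `f ⊆ X × Y` is Lagrangian for `ω_X ⊖ ω_Y` and `g ⊆ Y × Z` is Lagrangian for
`ω_Y ⊖ ω_Z`, then `{(x, z) : ∃ y, (x, y) ∈ f ∧ (y, z) ∈ g}` is a Lagrangian subspace of
`X × Z` for `ω_X ⊖ ω_Z`. -/
theorem comp_canonical_relation_lagrangian
    (X Y Z : Type*) [AddCommGroup X] [Module ℝ X] [FiniteDimensional ℝ X]
    [AddCommGroup Y] [Module ℝ Y] [FiniteDimensional ℝ Y]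
    [AddCommGroup Z] [Module ℝ Z] [FiniteDimensional ℝ Z]
    (ωX : LinearMap.BilinForm ℝ X) (hXnd : ωX.Nondegenerate) (hXalt : ωX.IsAlt)
    (ωY : LinearMap.BilinForm ℝ Y) (hYnd : ωY.Nondegenerate) (hYalt : ωY.IsAlt)
    (ωZ : LinearMap.BilinForm ℝ Z) (hZnd : ωZ.Nondegenerate) (hZalt : ωZ.IsAlt)
    (f : Submodule ℝ (X × Y)) (hf : (diffForm ωX ωY).orthogonal f = f)
    (g : Submodule ℝ (Y × Z)) (hg : (diffForm ωY ωZ).orthogonal g = g) :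
    ∃ W : Submodule ℝ (X × Z),
      (W : Set (X × Z)) = {p | ∃ y : Y, (p.1, y) ∈ f ∧ (y, p.2) ∈ g} ∧
      (diffForm ωX ωZ).orthogonal W = W :=
  ⟨linearRelComp f g, rfl,
    comp_canonical_relation_lagrangian_general hYalt.isRefl.ker_flip.ge hf hg⟩
end

section
/- Let X, Y, Z be symplectic vector spaces, f ⊆ X × Y a Lagrangian subspace for ω_X ⊖ ω_Y, and g ⊆ Y × Z a Lagrangian subspace for ω_Y ⊖ ω_Z. Consider in X × Y × Y × Z the subspaces T := {(x, y, y', z) : (x, y) ∈ f and (y', z) ∈ g} and D := {(x, y, y, z) : x ∈ X, y ∈ Y, z ∈ Z}. Then the pair (f, g) is monic, i.e. {y ∈ Y : (0, y) ∈ f and (y, 0) ∈ g} = {0}, if and only if the composition is transversal, i.e. T + D = X × Y × Y × Z. -/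
/-!
The subspace `D` is the kernel of the surjection `δ : ((x, y), (y', z)) ↦ y - y'`, so
`T + D` is everything exactly when `δ` maps `T = f × g` onto `Y`, i.e. when the sum `W` of the
projections of `f` and `g` to `Y` is all of `Y`. As `ω_Y` is nondegenerate, this means `W^⊥ = 0`.
A vector `y` is `ω_Y`-orthogonal to the projection of `f` iff `(0, y)` is orthogonal to `f`, i.e.
lies in `f`, and likewise for `(y, 0)` and `g`; so `W^⊥ = {y : (0, y) ∈ f and (y, 0) ∈ g}`.
-/

open Module

/-- The "diagonal" subspace `D = {(x, y, y, z)}` of `(X × Y) × (Y × Z)`, i.e. the kernel of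
`((x, y), (y', z)) ↦ y - y'`. -/
noncomputable def midDiagonal (X Y Z : Type*) [AddCommGroup X] [Module ℝ X]
    [AddCommGroup Y] [Module ℝ Y] [AddCommGroup Z] [Module ℝ Z] :
    Submodule ℝ ((X × Y) × (Y × Z)) :=
  LinearMap.ker
    ((LinearMap.snd ℝ X Y).comp (LinearMap.fst ℝ (X × Y) (Y × Z)) -
      (LinearMap.fst ℝ Y Z).comp (LinearMap.snd ℝ (X × Y) (Y × Z)))

/-- The difference form `B₁ ⊖ B₂` on `M × N`, over any commutative ring. The body has the shape of
that of `diffForm`, so that the two agree definitionally over `ℝ`. -/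
def differenceForm {R M N : Type*} [CommRing R] [AddCommGroup M] [Module R M]
    [AddCommGroup N] [Module R N]
    (B₁ : LinearMap.BilinForm R M) (B₂ : LinearMap.BilinForm R N) :
    LinearMap.BilinForm R (M × N) :=
  B₁.comp (LinearMap.fst R M N) (LinearMap.fst R M N) -
    B₂.comp (LinearMap.snd R M N) (LinearMap.snd R M N)

/-- The map `δ : ((x, y), (y', z)) ↦ y - y'`, whose kernel consists of the composable pairs; over
`ℝ` this kernel is `midDiagonal` by definition. -/
def middleDifference (R M N P : Type*) [Ring R] [AddCommGroup M] [Module R M]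
    [AddCommGroup N] [Module R N] [AddCommGroup P] [Module R P] :
    (M × N) × (N × P) →ₗ[R] N :=
  (LinearMap.snd R M N).comp (LinearMap.fst R (M × N) (N × P)) -
    (LinearMap.fst R N P).comp (LinearMap.snd R (M × N) (N × P))

section Transversality

variable {R M N P : Type*} [Ring R] [AddCommGroup M] [Module R M]
  [AddCommGroup N] [Module R N] [AddCommGroup P] [Module R P]

theorem range_middleDifference : LinearMap.range (middleDifference R M N P) = ⊤ :=
  LinearMap.range_eq_top.2 fun y => ⟨((0, y), 0), sub_zero y⟩

theorem map_middleDifference_prod (f : Submodule R (M × N)) (g : Submodule R (N × P)) :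
    (f.prod g).map (middleDifference R M N P) =
      f.map (LinearMap.snd R M N) ⊔ g.map (LinearMap.fst R N P) := by
  have coprod_eq : middleDifference R M N P =
      (LinearMap.snd R M N).coprod (-LinearMap.fst R N P) :=
    LinearMap.ext fun _ => sub_eq_add_neg _ _
  rw [coprod_eq, LinearMap.map_coprod_prod, Submodule.map_neg]

theorem prod_sup_ker_middleDifference_eq_top_iff
    (f : Submodule R (M × N)) (g : Submodule R (N × P)) :
    f.prod g ⊔ LinearMap.ker (middleDifference R M N P) = ⊤ ↔
      f.map (LinearMap.snd R M N) ⊔ g.map (LinearMap.fst R N P) = ⊤ := by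
  rw [← LinearMap.map_eq_top_iff range_middleDifference, map_middleDifference_prod]

end Transversality

section Orthogonality

theorem orthogonal_sup_s13 {R M : Type*} [CommSemiring R] [AddCommMonoid M] [Module R M]
    (B : LinearMap.BilinForm R M) (S T : Submodule R M) :
    B.orthogonal (S ⊔ T) = B.orthogonal S ⊓ B.orthogonal T := by
  ext y
  -- `y ∈ B.orthogonal S` unfolds to `S ≤ ker (B · y)`.
  exact sup_le_iff (a := S) (b := T) (c := LinearMap.ker (B.flip y))

theorem orthogonal_eq_bot_iff_eq_top {K V : Type*} [Field K] [AddCommGroup V] [Module K V]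
    [FiniteDimensional K V] {B : LinearMap.BilinForm K V} (hB : B.Nondegenerate)
    {W : Submodule K V} :
    B.orthogonal W = ⊥ ↔ W = ⊤ := by
  rw [← Submodule.finrank_eq_zero (R := K), LinearMap.BilinForm.finrank_orthogonal hB,
    Nat.sub_eq_zero_iff_le]
  exact ⟨fun h => Submodule.eq_top_of_finrank_eq (W.finrank_le.antisymm h),
    fun h => by rw [h, finrank_top]⟩

variable {R M N P : Type*} [CommRing R] [AddCommGroup M] [Module R M]
  [AddCommGroup N] [Module R N] [AddCommGroup P] [Module R P]

theorem comap_inr_orthogonal_differenceForm (B₁ : LinearMap.BilinForm R M)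
    (B₂ : LinearMap.BilinForm R N) (f : Submodule R (M × N)) :
    ((differenceForm B₁ B₂).orthogonal f).comap (LinearMap.inr R M N) =
      B₂.orthogonal (f.map (LinearMap.snd R M N)) := by
  ext y
  simpa [LinearMap.BilinForm.mem_orthogonal_iff, differenceForm] using forall_comm

theorem comap_inl_orthogonal_differenceForm (B₁ : LinearMap.BilinForm R M)
    (B₂ : LinearMap.BilinForm R N) (f : Submodule R (M × N)) :
    ((differenceForm B₁ B₂).orthogonal f).comap (LinearMap.inl R M N) =
      B₁.orthogonal (f.map (LinearMap.fst R M N)) := by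
  ext x
  simp [LinearMap.BilinForm.mem_orthogonal_iff, differenceForm]

theorem orthogonal_map_snd_sup_map_fst {B₁ : LinearMap.BilinForm R M}
    {B₂ : LinearMap.BilinForm R N} {B₃ : LinearMap.BilinForm R P}
    {f : Submodule R (M × N)} (hf : (differenceForm B₁ B₂).orthogonal f = f)
    {g : Submodule R (N × P)} (hg : (differenceForm B₂ B₃).orthogonal g = g) :
    B₂.orthogonal (f.map (LinearMap.snd R M N) ⊔ g.map (LinearMap.fst R N P)) =
      f.comap (LinearMap.inr R M N) ⊓ g.comap (LinearMap.inl R N P) := by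
  rw [orthogonal_sup_s13, ← comap_inr_orthogonal_differenceForm B₁, hf,
    ← comap_inl_orthogonal_differenceForm B₂ B₃, hg]

end Orthogonality

theorem monic_iff_transversal_general {K X Y Z : Type*} [Field K] [AddCommGroup X] [Module K X]
    [AddCommGroup Y] [Module K Y] [FiniteDimensional K Y] [AddCommGroup Z] [Module K Z]
    {ωX : LinearMap.BilinForm K X} {ωY : LinearMap.BilinForm K Y} (hY : ωY.Nondegenerate)
    {ωZ : LinearMap.BilinForm K Z}
    {f : Submodule K (X × Y)} (hf : (differenceForm ωX ωY).orthogonal f = f)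
    {g : Submodule K (Y × Z)} (hg : (differenceForm ωY ωZ).orthogonal g = g) :
    (∀ y : Y, ((0 : X), y) ∈ f → (y, (0 : Z)) ∈ g → y = 0) ↔
      f.prod g ⊔ LinearMap.ker (middleDifference K X Y Z) = ⊤ := by
  rw [prod_sup_ker_middleDifference_eq_top_iff, ← orthogonal_eq_bot_iff_eq_top hY,
    orthogonal_map_snd_sup_map_fst hf hg, Submodule.eq_bot_iff]
  simp only [Submodule.mem_inf, Submodule.mem_comap, LinearMap.inr_apply, LinearMap.inl_apply,
    and_imp]

/-- For linear canonical relations `f ⊆ X × Y` and `g ⊆ Y × Z`, the pair `(f, g)` is monic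
(`{y : (0, y) ∈ f ∧ (y, 0) ∈ g} = {0}`) if and only if the composition is transversal
(`T + D = X × Y × Y × Z`, where `T = f × g` and `D = {(x, y, y, z)}`). -/
theorem monic_iff_transversal
    (X Y Z : Type*) [AddCommGroup X] [Module ℝ X] [FiniteDimensional ℝ X]
    [AddCommGroup Y] [Module ℝ Y] [FiniteDimensional ℝ Y]
    [AddCommGroup Z] [Module ℝ Z] [FiniteDimensional ℝ Z]
    (ωX : LinearMap.BilinForm ℝ X) (hXnd : ωX.Nondegenerate) (hXalt : ωX.IsAlt)
    (ωY : LinearMap.BilinForm ℝ Y) (hYnd : ωY.Nondegenerate) (hYalt : ωY.IsAlt)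
    (ωZ : LinearMap.BilinForm ℝ Z) (hZnd : ωZ.Nondegenerate) (hZalt : ωZ.IsAlt)
    (f : Submodule ℝ (X × Y)) (hf : (diffForm ωX ωY).orthogonal f = f)
    (g : Submodule ℝ (Y × Z)) (hg : (diffForm ωY ωZ).orthogonal g = g) :
    (∀ y : Y, ((0 : X), y) ∈ f → (y, (0 : Z)) ∈ g → y = 0) ↔
      f.prod g ⊔ midDiagonal X Y Z = ⊤ :=
  monic_iff_transversal_general hYnd hf hg
end

section
/- Let V be a symplectic vector space and C a coisotropic subspace of V. Then there exists a unique alternating bilinear form ω̄ on the quotient C/Cᗮ such that ω̄(π(x), π(y)) = ω(x, y) for all x, y ∈ C, where π : C → C/Cᗮ is the quotient map, and ω̄ is nondegenerate; thus C/Cᗮ is again a symplectic vector space (the symplectic reduction of V by C). -/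
open Module

/-!
For a reflexive form, the radical of its restriction to `C` is `C ∩ Cᗮ`, which is `Cᗮ` itself when
`C` is coisotropic. A form descends to the quotient by its radical, and the descended form is
nondegenerate because a class pairing to zero with every class is represented by an element of the
radical. Uniqueness is the surjectivity of the quotient map.
-/

section Quotient

variable {R S T M N P : Type*} [CommRing R] [CommRing S] [CommRing T]
  [AddCommGroup M] [AddCommGroup N] [AddCommGroup P] [Module R M] [Module S N] [Module T P]
  {ρ : R →+* T} {σ : S →+* T} {M' : Submodule R M} {N' : Submodule S N}

theorem linearMap_qext₂ {b b' : M ⧸ M' →ₛₗ[ρ] N ⧸ N' →ₛₗ[σ] P}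
    (h : ∀ x y, b (Submodule.Quotient.mk x) (Submodule.Quotient.mk y) =
      b' (Submodule.Quotient.mk x) (Submodule.Quotient.mk y)) :
    b = b' :=
  Submodule.linearMap_qext _ <| LinearMap.ext fun x ↦
    Submodule.linearMap_qext _ <| LinearMap.ext fun y ↦ h x y

variable {B : M →ₛₗ[ρ] N →ₛₗ[σ] P} {b : M ⧸ M' →ₛₗ[ρ] N ⧸ N' →ₛₗ[σ] P}

theorem separatingLeft_of_ker_le
    (hb : ∀ x y, b (Submodule.Quotient.mk x) (Submodule.Quotient.mk y) = B x y)
    (hM' : B.ker ≤ M') : b.SeparatingLeft := by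
  refine (Submodule.Quotient.forall M').2 fun x hx ↦ (Submodule.Quotient.mk_eq_zero M').2 (hM' ?_)
  exact LinearMap.ext fun y ↦ (hb x y).symm.trans (hx _)

theorem nondegenerate_of_ker_le
    (hb : ∀ x y, b (Submodule.Quotient.mk x) (Submodule.Quotient.mk y) = B x y)
    (hM' : B.ker ≤ M') (hN' : B.flip.ker ≤ N') : b.Nondegenerate :=
  ⟨separatingLeft_of_ker_le hb hM', LinearMap.flip_separatingLeft.1 <|
    separatingLeft_of_ker_le (B := B.flip) (fun y x ↦ hb x y) hN'⟩

end Quotient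

section Reduction

variable {R S M P : Type*} [CommRing R] [CommRing S] [AddCommGroup M] [AddCommGroup P]
  [Module R M] [Module S P] {ρ σ : R →+* S} {B : M →ₛₗ[ρ] M →ₛₗ[σ] P}

theorem isAlt_of_quotient_mk {N : Submodule R M} {b : M ⧸ N →ₛₗ[ρ] M ⧸ N →ₛₗ[σ] P}
    (hb : ∀ x y, b (Submodule.Quotient.mk x) (Submodule.Quotient.mk y) = B x y) (hB : B.IsAlt) :
    b.IsAlt :=
  (Submodule.Quotient.forall N).2 fun x ↦ (hb x x).trans (hB x)

theorem ker_domRestrict₁₂_self (hB : B.IsRefl) (C : Submodule R M) :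
    (B.domRestrict₁₂ C C).ker = (C.orthogonalBilin B).comap C.subtype := by
  ext x
  simp only [LinearMap.mem_ker, LinearMap.ext_iff, LinearMap.domRestrict₁₂_apply,
    LinearMap.zero_apply, Subtype.forall, Submodule.mem_comap, Submodule.subtype_apply,
    Submodule.mem_orthogonalBilin_iff, hB.eq_iff]

/-- The form induced by a reflexive form `B` on the reduction `C / (C ∩ Cᗮ)`; when `C` is
coisotropic this quotient is `C / Cᗮ`. As `Cᗮ` is not a submodule of `C`, the quotient is taken by
its preimage under the inclusion of `C`. -/
def reducedForm (hB : B.IsRefl) (C : Submodule R M) :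
    C ⧸ (C.orthogonalBilin B).comap C.subtype →ₛₗ[ρ]
      C ⧸ (C.orthogonalBilin B).comap C.subtype →ₛₗ[σ] P :=
  (hB.domRestrict C).liftQ₂ _ _ (ker_domRestrict₁₂_self hB C).ge

theorem reducedForm_mk_mk (hB : B.IsRefl) (C : Submodule R M) (x y : C) :
    reducedForm hB C (Submodule.Quotient.mk x) (Submodule.Quotient.mk y) = B x y :=
  rfl

theorem nondegenerate_of_reduction (hB : B.IsRefl) {C : Submodule R M}
    {b : C ⧸ (C.orthogonalBilin B).comap C.subtype →ₛₗ[ρ]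
      C ⧸ (C.orthogonalBilin B).comap C.subtype →ₛₗ[σ] P}
    (hb : ∀ x y : C, b (Submodule.Quotient.mk x) (Submodule.Quotient.mk y) = B x y) :
    b.Nondegenerate := by
  have hker := ker_domRestrict₁₂_self hB C
  have hflip := (hB.domRestrict C).ker_flip
  exact nondegenerate_of_ker_le (B := B.domRestrict₁₂ C C) hb hker.le (hflip.trans hker).le

end Reduction

theorem symplectic_reduction_general {R M P : Type*} [CommRing R] [AddCommGroup M]
    [AddCommGroup P] [Module R M] [Module R P] (ω : M →ₗ[R] M →ₗ[R] P) (halt : ω.IsAlt)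
    (C : Submodule R M) :
    (∃! ωbar : C ⧸ (C.orthogonalBilin ω).comap C.subtype →ₗ[R]
        C ⧸ (C.orthogonalBilin ω).comap C.subtype →ₗ[R] P,
      ωbar.IsAlt ∧ ∀ x y : C,
        ωbar (Submodule.Quotient.mk x) (Submodule.Quotient.mk y) = ω x y) ∧
    ∀ ωbar : C ⧸ (C.orthogonalBilin ω).comap C.subtype →ₗ[R]
        C ⧸ (C.orthogonalBilin ω).comap C.subtype →ₗ[R] P,
      (∀ x y : C, ωbar (Submodule.Quotient.mk x) (Submodule.Quotient.mk y) = ω x y) →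
      ωbar.Nondegenerate := by
  have hmk := reducedForm_mk_mk halt.isRefl C
  have hbar : (reducedForm halt.isRefl C).IsAlt :=
    isAlt_of_quotient_mk (B := ω.domRestrict₁₂ C C) hmk fun x ↦ halt x
  refine ⟨⟨reducedForm halt.isRefl C, ⟨hbar, hmk⟩, ?_⟩,
    fun ωbar hω ↦ nondegenerate_of_reduction halt.isRefl hω⟩
  rintro ωbar ⟨-, hω⟩
  exact linearMap_qext₂ fun x y ↦ (hω x y).trans (hmk x y).symm

/-- Symplectic reduction of a symplectic vector space `V` by a coisotropic subspace `C`: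
there is a unique alternating bilinear form `ω̄` on the quotient `C / Cᗮ` compatible with `ω`
via the quotient map (`ω̄(π x, π y) = ω(x, y)` for `x, y ∈ C`), and any such form is
nondegenerate, so `C / Cᗮ` is again a symplectic vector space. -/
theorem symplectic_reduction
    (V : Type*) [AddCommGroup V] [Module ℝ V] [FiniteDimensional ℝ V]
    (ω : LinearMap.BilinForm ℝ V) (hnd : ω.Nondegenerate) (halt : ω.IsAlt)
    (C : Submodule ℝ V) (hC : ω.orthogonal C ≤ C) :
    (∃! ωbar : LinearMap.BilinForm ℝ (C ⧸ (ω.orthogonal C).comap C.subtype),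
      ωbar.IsAlt ∧ ∀ x y : C,
        ωbar (Submodule.Quotient.mk x) (Submodule.Quotient.mk y) = ω (x : V) (y : V)) ∧
    (∀ ωbar : LinearMap.BilinForm ℝ (C ⧸ (ω.orthogonal C).comap C.subtype),
      ωbar.IsAlt →
      (∀ x y : C,
        ωbar (Submodule.Quotient.mk x) (Submodule.Quotient.mk y) = ω (x : V) (y : V)) →
      ωbar.Nondegenerate) :=
  have ⟨hexists, hnondeg⟩ := symplectic_reduction_general ω halt C
  ⟨hexists, fun ωbar _ ↦ hnondeg ωbar⟩
end

section
/- Let V be a symplectic vector space, C a coisotropic subspace, and L a Lagrangian subspace of V. Then the reduction of L by C is Lagrangian: the subspace Λ := (L ∩ C) + Cᗮ of V satisfies Λᗮ ∩ C = Λ; equivalently, the image of L ∩ C in the symplectic reduction C/Cᗮ is a Lagrangian subspace of C/Cᗮ. -/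
open Module

/-! Call a subspace closed if it is its own double orthogonal. A closed subspace plus a
finite-dimensional one is again closed; in particular a finite-dimensional coisotropic `C`, which
contains the radical `⊤ᗮ`, is closed. If `L = Lᗮ` and `C` is closed, then `L ⊓ C = (L ⊔ Cᗮ)ᗮ`, so
`(L ⊓ C)ᗮ = L ⊔ Cᗮ` as soon as `Cᗮ` is finite-dimensional. Hence `Λᗮ ⊓ C = (L ⊔ Cᗮ) ⊓ C`, which is
`Λ` by the modular law because `Cᗮ ≤ C`. -/

lemma bilinForm_orthogonal_sup {R M : Type*} [CommSemiring R] [AddCommMonoid M] [Module R M]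
    (B : LinearMap.BilinForm R M) (N P : Submodule R M) :
    B.orthogonal (N ⊔ P) = B.orthogonal N ⊓ B.orthogonal P := by
  refine le_antisymm (le_inf (LinearMap.BilinForm.orthogonal_le le_sup_left)
    (LinearMap.BilinForm.orthogonal_le le_sup_right)) ?_
  rintro x ⟨hN, hP⟩
  have sup_le_ker : N ⊔ P ≤ LinearMap.ker (B.flip x) := sup_le hN hP
  exact sup_le_ker

section Field

variable {K V : Type*} [Field K] [AddCommGroup V] [Module K V] {B : LinearMap.BilinForm K V}

lemma bilinForm_orthogonal_orthogonal_sup (hB : B.IsRefl) (U F : Submodule K V)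
    [FiniteDimensional K F] :
    B.orthogonal (B.orthogonal (U ⊔ F)) = B.orthogonal (B.orthogonal U) ⊔ F := by
  apply le_antisymm
  · intro x hx
    let restrict : V →ₗ[K] Dual K (B.orthogonal U) := B.domRestrict₂ (B.orthogonal U)
    -- A functional vanishing on the common zeros of a finite-dimensional space of functionals
    -- belongs to that space.
    have restrict_mem : restrict x ∈ F.map restrict := by
      rw [← Subspace.dualCoannihilator_dualAnnihilator_eq (W := F.map restrict),
        Submodule.mem_dualAnnihilator]
      intro u hu
      have u_mem : (u : V) ∈ B.orthogonal (U ⊔ F) := by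
        rw [bilinForm_orthogonal_sup]
        exact ⟨u.2, fun f hf ↦ (Submodule.mem_dualCoannihilator u).mp hu _ ⟨f, hf, rfl⟩⟩
      exact hB _ _ (hx u u_mem)
    obtain ⟨f, hf, restrict_eq⟩ := restrict_mem
    have sub_mem : x - f ∈ B.orthogonal (B.orthogonal U) := by
      intro u hu
      have apply_eq : B f u = B x u := LinearMap.congr_fun restrict_eq ⟨u, hu⟩
      apply hB
      rw [map_sub, LinearMap.sub_apply, apply_eq, sub_self]
    exact Submodule.mem_sup.mpr ⟨x - f, sub_mem, f, hf, sub_add_cancel x f⟩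
  · exact sup_le
      (LinearMap.BilinForm.orthogonal_le (LinearMap.BilinForm.orthogonal_le le_sup_left))
      (le_sup_right.trans (LinearMap.BilinForm.le_orthogonal_orthogonal hB))

lemma bilinForm_orthogonal_orthogonal_eq_self_of_orthogonal_le (hB : B.IsRefl)
    {C : Submodule K V} [FiniteDimensional K C] (hC : B.orthogonal C ≤ C) :
    B.orthogonal (B.orthogonal C) = C := by
  have radical_le : B.orthogonal ⊤ ≤ C := (LinearMap.BilinForm.orthogonal_le le_top).trans hC
  simpa [radical_le] using bilinForm_orthogonal_orthogonal_sup hB ⊥ C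

lemma bilinForm_orthogonal_inf_eq_sup (hB : B.IsRefl) {L C : Submodule K V}
    [FiniteDimensional K (B.orthogonal C)] (hL : B.orthogonal L = L)
    (hC : B.orthogonal (B.orthogonal C) = C) :
    B.orthogonal (L ⊓ C) = L ⊔ B.orthogonal C := by
  calc B.orthogonal (L ⊓ C)
    _ = B.orthogonal (B.orthogonal (L ⊔ B.orthogonal C)) := by
      rw [bilinForm_orthogonal_sup, hL, hC]
    _ = L ⊔ B.orthogonal C := by
      rw [bilinForm_orthogonal_orthogonal_sup hB, hL, hL]

theorem reduction_of_lagrangian_is_lagrangian_general (hB : B.IsRefl) {L C : Submodule K V}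
    [FiniteDimensional K (B.orthogonal C)] (hC : B.orthogonal C ≤ C)
    (hCC : B.orthogonal (B.orthogonal C) = C) (hL : B.orthogonal L = L) :
    B.orthogonal ((L ⊓ C) ⊔ B.orthogonal C) ⊓ C = (L ⊓ C) ⊔ B.orthogonal C := by
  calc B.orthogonal ((L ⊓ C) ⊔ B.orthogonal C) ⊓ C
    _ = (B.orthogonal C ⊔ L) ⊓ C := by
      rw [bilinForm_orthogonal_sup, bilinForm_orthogonal_inf_eq_sup hB hL hCC, hCC, inf_assoc,
        inf_idem, sup_comm]
    _ = (L ⊓ C) ⊔ B.orthogonal C := by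
      rw [sup_inf_assoc_of_le L hC, sup_comm]

end Field

/-- The reduction of a Lagrangian subspace by a coisotropic subspace is Lagrangian: if `C` is
coisotropic and `L` is Lagrangian in a symplectic vector space `V`, then the subspace
`Λ = (L ⊓ C) ⊔ Cᗮ` of `V` (representing the image of `L ⊓ C` in the symplectic reduction
`C/Cᗮ`) satisfies `Λᗮ ⊓ C = Λ`; i.e. the image of `L ⊓ C` in `C/Cᗮ` is Lagrangian. -/
theorem reduction_of_lagrangian_is_lagrangian
    (V : Type*) [AddCommGroup V] [Module ℝ V] [FiniteDimensional ℝ V]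
    (ω : LinearMap.BilinForm ℝ V) (hnd : ω.Nondegenerate) (halt : ω.IsAlt)
    (C : Submodule ℝ V) (hC : ω.orthogonal C ≤ C)
    (L : Submodule ℝ V) (hL : ω.orthogonal L = L) :
    ω.orthogonal ((L ⊓ C) ⊔ ω.orthogonal C) ⊓ C = (L ⊓ C) ⊔ ω.orthogonal C := by
  exact reduction_of_lagrangian_is_lagrangian_general halt.isRefl hC
    (bilinForm_orthogonal_orthogonal_eq_self_of_orthogonal_le halt.isRefl hC) hL
end
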